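/- The spin Hamiltonian H_1 is obtained from the operator \bar H_1 = −4 T_1^* − 2(2b+1) Σ_i ∂_{z_i} + 4ω Σ_i z_i ∂_{z_i} + Nω(4a+2b+1) by the change of variables z_i = x_i² and conjugation with the gauge factor μ(x) = e^{−ω r²/2} Π_{i=1}^N |x_i² − x_{i+1}²|^a x_i^b, where T_1^* = Σ_i z_i ∂_{z_i}² + 2a Σ_i (z_i − z_{i+1})^{-1}(z_i ∂_{z_i} − z_{i+1} ∂_{z_{i+1}}) − a Σ_i (z_i + z_{i+1})(z_i − z_{i+1})^{-2}(1 − S_{i,i+1}). Precisely: let ζ : C_1 → Z_1, ζ(x) = (x_1²,…,x_N²), where Z_1 = {z ∈ ℝ^N : 0 < z_1 < ⋯ < z_N}; then for every smooth Σ-valued function F on Z_1 and every x ∈ C_1, H_1(μ · (F∘ζ))(x) = μ(x) · ((\bar H_1 F)(ζ(x))). -/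

import Mathlib

noncomputable section

/-- The spin space `Σ`: complex functions on `Fin N → Fin d`. -/
abbrev Spin (N d : ℕ) : Type := (Fin N → Fin d) → ℂ

/-- Partial derivative `∂_i F` of a function of `N` real variables. -/
noncomputable def pd {N : ℕ} {E : Type} [NormedAddCommGroup E] [NormedSpace ℝ E]
    (i : Fin N) (F : (Fin N → ℝ) → E) : (Fin N → ℝ) → E :=
  fun x => fderiv ℝ F x (Pi.single i 1)

/-- The spin exchange operator `S_{ij}`, transposing the `i`-th and `j`-th spin slots. -/
def Sop {N d : ℕ} (i j : Fin N) (v : Spin N d) : Spin N d :=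
  fun c => v (c ∘ Equiv.swap i j)

/-- The configuration space `C_1 = {x : 0 < x_1 < ⋯ < x_N}` (also the domain
`Z_1 = {z : 0 < z_1 < ⋯ < z_N}`). -/
def C1 (N : ℕ) [NeZero N] : Set (Fin N → ℝ) := {x | StrictMono x ∧ 0 < x 0}

/-- The change of variables `ζ(x) = (x_1², …, x_N²)`. -/
def zeta {N : ℕ} (x : Fin N → ℝ) : Fin N → ℝ := fun i => (x i) ^ 2

/-- The Hamiltonian `H_1 = -∑ i ∂_i² + V_1` with
`V_1 = ω² r² + ∑ i b(b-1)/x_i² + ∑ i 8a² x_i²/((x_i² - x_{i-1}²)(x_i² - x_{i+1}²))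
  + 4a ∑ i (x_i² + x_{i+1}²)(x_i² - x_{i+1}²)⁻² (a - S_{i,i+1})` (indices cyclic). -/
noncomputable def H1 {N d : ℕ} [NeZero N] (a b ω : ℝ)
    (Ψ : (Fin N → ℝ) → Spin N d) : (Fin N → ℝ) → Spin N d :=
  fun x =>
    -(∑ i : Fin N, pd i (pd i Ψ) x)
    + (ω ^ 2 * (∑ i : Fin N, (x i) ^ 2)
        + (∑ i : Fin N, b * (b - 1) / (x i) ^ 2)
        + ∑ i : Fin N, 8 * a ^ 2 * (x i) ^ 2 /
            (((x i) ^ 2 - (x (i - 1)) ^ 2) * ((x i) ^ 2 - (x (i + 1)) ^ 2))) • Ψ x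
    + (4 * a) • ∑ i : Fin N,
        (((x i) ^ 2 + (x (i + 1)) ^ 2) / ((x i) ^ 2 - (x (i + 1)) ^ 2) ^ 2) •
          (a • Ψ x - Sop i (i + 1) (Ψ x))

/-- The gauge factor `μ(x) = exp(-ω r²/2) ∏ i |x_i² - x_{i+1}²|^a x_i^b`. -/
noncomputable def mu1 {N : ℕ} [NeZero N] (a b ω : ℝ) (x : Fin N → ℝ) : ℝ :=
  Real.exp (-(ω / 2) * ∑ i : Fin N, (x i) ^ 2) *
    ∏ i : Fin N, (|(x i) ^ 2 - (x (i + 1)) ^ 2| ^ a * (x i) ^ b)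

/-- The operator `T_1^* = ∑ i z_i ∂_i² + 2a ∑ i (z_i - z_{i+1})⁻¹ (z_i ∂_i - z_{i+1} ∂_{i+1})
  - a ∑ i (z_i + z_{i+1})(z_i - z_{i+1})⁻² (1 - S_{i,i+1})`. -/
noncomputable def T1star {N d : ℕ} [NeZero N] (a : ℝ)
    (F : (Fin N → ℝ) → Spin N d) : (Fin N → ℝ) → Spin N d :=
  fun z =>
    (∑ i : Fin N, z i • pd i (pd i F) z)
    + (2 * a) • ∑ i : Fin N, (z i - z (i + 1))⁻¹ •
        (z i • pd i F z - z (i + 1) • pd (i + 1) F z)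
    - a • ∑ i : Fin N, ((z i + z (i + 1)) / (z i - z (i + 1)) ^ 2) •
        (F z - Sop i (i + 1) (F z))

/-- The gauge Hamiltonian `H̄_1 = -4 T_1^* - 2(2b+1) ∑ i ∂_i + 4ω ∑ i z_i ∂_i
  + Nω(4a+2b+1)`. -/
noncomputable def Hbar1 {N d : ℕ} [NeZero N] (a b ω : ℝ)
    (F : (Fin N → ℝ) → Spin N d) : (Fin N → ℝ) → Spin N d :=
  fun z =>
    (-4 : ℝ) • T1star a F z - (2 * (2 * b + 1)) • ∑ i : Fin N, pd i F z
    + (4 * ω) • ∑ i : Fin N, z i • pd i F z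
    + ((N : ℝ) * ω * (4 * a + 2 * b + 1)) • F z

lemma isOpen_C1 (N : ℕ) [NeZero N] : IsOpen (C1 N) := by
  have : C1 N = (⋂ i : Fin N, ⋂ j : Fin N, ⋂ _ : i < j, {x : Fin N → ℝ | x i < x j}) ∩ {x | 0 < x 0} := by
    ext x
    simp [C1, StrictMono]
  rw [this]
  refine IsOpen.inter ?_ (isOpen_lt continuous_const (continuous_apply _))
  refine isOpen_iInter_of_finite fun i => isOpen_iInter_of_finite fun j =>
    isOpen_iInter_of_finite fun _ => isOpen_lt (continuous_apply _) (continuous_apply _)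

lemma C1_pos {N : ℕ} [NeZero N] {x : Fin N → ℝ} (hx : x ∈ C1 N) (i : Fin N) : 0 < x i :=
  lt_of_lt_of_le hx.2 (hx.1.monotone (Fin.zero_le i))

lemma zeta_mem {N : ℕ} [NeZero N] {x : Fin N → ℝ} (hx : x ∈ C1 N) : zeta x ∈ C1 N := by
  refine ⟨fun i j hij => ?_, ?_⟩
  · have h1 := hx.1 hij
    have h2 := C1_pos hx i
    simp only [zeta]
    gcongr
  · have := C1_pos hx 0
    simp only [zeta]
    positivity

lemma C1_sub_ne {N : ℕ} [NeZero N] {x : Fin N → ℝ} (hx : x ∈ C1 N) {i j : Fin N} (h : i ≠ j) :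
    (x i) ^ 2 - (x j) ^ 2 ≠ 0 := by
  intro h0
  exact h ((zeta_mem hx).1.injective (sub_eq_zero.mp h0))

lemma succ_ne {N : ℕ} [NeZero N] (hN : 3 ≤ N) (i : Fin N) : i + 1 ≠ i := by
  obtain ⟨n, rfl⟩ : ∃ n, N = n + 2 := ⟨N - 2, by omega⟩
  intro h
  have : (1 : Fin (n + 2)) = 0 := by simpa only [add_eq_left] using h
  exact absurd this (by simp)

lemma pd_line {N : ℕ} {E : Type} [NormedAddCommGroup E] [NormedSpace ℝ E] {i : Fin N}
    {f : (Fin N → ℝ) → E} {x : Fin N → ℝ} {f' : E} (hf : DifferentiableAt ℝ f x)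
    (h : HasDerivAt (fun t : ℝ => f (fun j => x j + t * Pi.single (M := fun _ => ℝ) i 1 j)) f' 0) : pd i f x = f' := by
  have h1 := hf.hasFDerivAt.hasLineDerivAt (Pi.single i 1)
  exact HasDerivAt.unique h1 h

lemma coord {N : ℕ} (x : Fin N → ℝ) (i j : Fin N) :
    HasDerivAt (fun t : ℝ => x j + t * Pi.single (M := fun _ => ℝ) i 1 j)
      (Pi.single (M := fun _ => ℝ) i 1 j) 0 := by
  simpa using ((hasDerivAt_id (0:ℝ)).mul_const (Pi.single (M := fun _ => ℝ) i 1 j)).const_add (x j)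

lemma pd_smul {N : ℕ} {E : Type} [NormedAddCommGroup E] [NormedSpace ℝ E] {i : Fin N}
    {f : (Fin N → ℝ) → ℝ} {g : (Fin N → ℝ) → E} {x : Fin N → ℝ}
    (hf : DifferentiableAt ℝ f x) (hg : DifferentiableAt ℝ g x) :
    pd i (fun y => f y • g y) x = f x • pd i g x + pd i f x • g x := by
  simp only [pd]
  rw [fderiv_fun_smul hf hg]
  simp

lemma pd_add {N : ℕ} {E : Type} [NormedAddCommGroup E] [NormedSpace ℝ E] {i : Fin N}
    {f g : (Fin N → ℝ) → E} {x : Fin N → ℝ}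
    (hf : DifferentiableAt ℝ f x) (hg : DifferentiableAt ℝ g x) :
    pd i (fun y => f y + g y) x = pd i f x + pd i g x := by
  simp only [pd]
  rw [fderiv_fun_add hf hg]
  simp

lemma differentiable_zeta {N : ℕ} : Differentiable ℝ (zeta (N := N)) := by
  unfold zeta
  fun_prop

lemma pd_zeta {N : ℕ} {E : Type} [NormedAddCommGroup E] [NormedSpace ℝ E] {i : Fin N}
    {G : (Fin N → ℝ) → E} {x : Fin N → ℝ} (hG : DifferentiableAt ℝ G (zeta x)) :
    pd i (fun y => G (zeta y)) x = (2 * x i) • pd i G (zeta x) := by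
  have h1 := fderiv_fun_comp x hG (differentiable_zeta x)
  have h2 : fderiv ℝ (zeta (N := N)) x (Pi.single i 1) = (2 * x i) • Pi.single i 1 := by
    refine pd_line (differentiable_zeta x) ?_
    rw [hasDerivAt_pi]
    intro j
    have := (coord x i j).pow 2
    simp only [zeta]
    refine this.congr_deriv ?_
    by_cases h : j = i
    · subst h; simp
    · simp [h]
  simp only [pd]
  rw [h1]
  simp [h2]

/-- logarithm of the gauge factor -/
def lmu {N : ℕ} [NeZero N] (a b ω : ℝ) (x : Fin N → ℝ) : ℝ :=
  -(ω / 2) * ∑ i : Fin N, (x i) ^ 2 +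
    ∑ i : Fin N, (a * Real.log ((x i) ^ 2 - (x (i + 1)) ^ 2) + b * Real.log (x i))

/-- logarithmic derivative of the gauge factor -/
def phi {N : ℕ} [NeZero N] (a b ω : ℝ) (i : Fin N) (x : Fin N → ℝ) : ℝ :=
  -ω * x i + b * (x i)⁻¹ +
    2 * a * (x i * (((x i) ^ 2 - (x (i + 1)) ^ 2)⁻¹ - ((x (i - 1)) ^ 2 - (x i) ^ 2)⁻¹))

lemma mu1_eq {N : ℕ} [NeZero N] (hN : 3 ≤ N) (a b ω : ℝ) {x : Fin N → ℝ} (hx : x ∈ C1 N) :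
    mu1 a b ω x = Real.exp (lmu a b ω x) := by
  rw [lmu, Real.exp_add, Real.exp_sum, mu1]
  congr 1
  refine Finset.prod_congr rfl fun i _ => ?_
  have h := C1_sub_ne hx (succ_ne hN i).symm
  rw [Real.exp_add, Real.rpow_def_of_pos (abs_pos.mpr h), Real.rpow_def_of_pos (C1_pos hx i),
    Real.log_abs, mul_comm a, mul_comm b]

lemma lmu_diff {N : ℕ} [NeZero N] (hN : 3 ≤ N) (a b ω : ℝ) {x : Fin N → ℝ} (hx : x ∈ C1 N) :
    DifferentiableAt ℝ (lmu a b ω) x := by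
  unfold lmu
  have h := fun i => C1_sub_ne hx (succ_ne hN i).symm
  have h' := fun i => (C1_pos hx i).ne'
  refine DifferentiableAt.add (by fun_prop) ?_
  refine DifferentiableAt.fun_sum fun i _ => ?_
  have h1 := h i
  have h2 := h' i
  fun_prop (disch := assumption)

lemma pd_lmu {N : ℕ} [NeZero N] (hN : 3 ≤ N) (a b ω : ℝ) {x : Fin N → ℝ} (hx : x ∈ C1 N)
    (i : Fin N) : pd i (lmu a b ω) x = phi a b ω i x := by
  refine pd_line (lmu_diff hN a b ω hx) ?_
  unfold lmu
  have h := fun i => C1_sub_ne hx (succ_ne hN i).symm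
  have h' := fun i => (C1_pos hx i).ne'
  have h1 := (HasDerivAt.fun_sum (u := Finset.univ)
    fun j (_ : j ∈ Finset.univ) => (coord x i j).fun_pow 2).const_mul (-(ω / 2))
  have h2 := HasDerivAt.fun_sum (u := Finset.univ)
    fun j (_ : j ∈ Finset.univ) =>
      (((((coord x i j).fun_pow 2).fun_sub ((coord x i (j+1)).fun_pow 2)).log
        (by simpa using h j)).const_mul a).fun_add
      (((coord x i j).log (by simpa using h' j)).const_mul b)
  refine (h1.fun_add h2).congr_deriv ?_
  have e1 : ∀ f : Fin N → ℝ, ∑ j, f j * Pi.single (M := fun _ => ℝ) i 1 j = f i := by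
    intro f; simp [Pi.single_apply]
  have e2 : ∀ f : Fin N → ℝ, ∑ j, f j * Pi.single (M := fun _ => ℝ) i 1 (j + 1) = f (i - 1) := by
    intro f
    rw [← Equiv.sum_comp (Equiv.subRight (1 : Fin N))]
    simp [Pi.single_apply]
  have e3 : ∀ j : Fin N, a * ((2 * x j * Pi.single (M := fun _ => ℝ) i 1 j - 2 * x (j+1) * Pi.single (M := fun _ => ℝ) i 1 (j+1)) / (x j ^ 2 - x (j+1)^2)) + b * (Pi.single (M := fun _ => ℝ) i 1 j / x j)
     = (a * 2 * x j / (x j ^ 2 - x (j+1)^2) + b / x j) * Pi.single (M := fun _ => ℝ) i 1 j + (- (a * 2 * x (j+1) / (x j ^ 2 - x (j+1)^2))) * Pi.single (M := fun _ => ℝ) i 1 (j+1) := by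
    intro j; ring
  simp only [zero_mul, add_zero, Nat.cast_ofNat, Nat.add_one_sub_one, pow_one, e1, e3,
    Finset.sum_add_distrib, e2, sub_add_cancel, phi]
  ring

lemma mu_evt {N : ℕ} [NeZero N] (hN : 3 ≤ N) (a b ω : ℝ) {x : Fin N → ℝ} (hx : x ∈ C1 N) :
    mu1 a b ω =ᶠ[nhds x] fun y => Real.exp (lmu a b ω y) := by
  filter_upwards [(isOpen_C1 N).mem_nhds hx] with y hy using mu1_eq hN a b ω hy

lemma mu_diff {N : ℕ} [NeZero N] (hN : 3 ≤ N) (a b ω : ℝ) {x : Fin N → ℝ} (hx : x ∈ C1 N) :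
    DifferentiableAt ℝ (mu1 a b ω) x :=
  ((lmu_diff hN a b ω hx).exp).congr_of_eventuallyEq (mu_evt hN a b ω hx)

lemma pd_mu {N : ℕ} [NeZero N] (hN : 3 ≤ N) (a b ω : ℝ) {x : Fin N → ℝ} (hx : x ∈ C1 N)
    (i : Fin N) : pd i (mu1 a b ω) x = mu1 a b ω x * phi a b ω i x := by
  rw [← pd_lmu hN a b ω hx i, mu1_eq hN a b ω hx]
  simp only [pd]
  rw [(mu_evt hN a b ω hx).fderiv_eq, fderiv_exp (lmu_diff hN a b ω hx)]
  simp

lemma phi_diff {N : ℕ} [NeZero N] (hN : 3 ≤ N) (a b ω : ℝ) {x : Fin N → ℝ} (hx : x ∈ C1 N)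
    (i : Fin N) : DifferentiableAt ℝ (phi a b ω i) x := by
  unfold phi
  have h1 := C1_sub_ne hx (succ_ne hN i).symm
  have h2 := C1_sub_ne hx (succ_ne hN (i - 1)).symm
  rw [sub_add_cancel] at h2
  have h' := (C1_pos hx i).ne'
  fun_prop (disch := assumption)

lemma pd_phi {N : ℕ} [NeZero N] (hN : 3 ≤ N) (a b ω : ℝ) {x : Fin N → ℝ} (hx : x ∈ C1 N)
    (i : Fin N) : pd i (phi a b ω i) x = -ω - b / x i ^ 2 +
      2 * a * (((x i) ^ 2 - (x (i + 1)) ^ 2)⁻¹ - ((x (i - 1)) ^ 2 - (x i) ^ 2)⁻¹)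
      - 4 * a * x i ^ 2 * ((((x i) ^ 2 - (x (i + 1)) ^ 2)⁻¹)^2 + (((x (i - 1)) ^ 2 - (x i) ^ 2)⁻¹)^2) := by
  have h1 := C1_sub_ne hx (succ_ne hN i).symm
  have h2 := C1_sub_ne hx (succ_ne hN (i - 1)).symm
  have n1 := succ_ne hN i
  have n2 := (succ_ne hN (i - 1)).symm
  rw [sub_add_cancel] at h2 n2
  have h' := (C1_pos hx i).ne'
  refine pd_line (phi_diff hN a b ω hx i) ?_
  unfold phi
  have c0 := coord x i i
  have c1 := coord x i (i + 1)
  have c2 := coord x i (i - 1)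
  have k := ((c0.const_mul (-ω)).fun_add ((c0.fun_inv (by simpa using h')).const_mul b)).fun_add
    ((c0.fun_mul ((((c0.fun_pow 2).fun_sub (c1.fun_pow 2)).fun_inv (by simpa using h1)).fun_sub
      (((c2.fun_pow 2).fun_sub (c0.fun_pow 2)).fun_inv (by simpa using h2)))).const_mul (2 * a))
  refine k.congr_deriv ?_
  simp only [Pi.single_eq_same, Pi.single_eq_of_ne n1, Pi.single_eq_of_ne n2]
  simp only [zero_mul, add_zero, Nat.cast_ofNat, Nat.add_one_sub_one, pow_one, mul_zero, mul_one,
    sub_zero, zero_sub]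
  field_simp
  ring

lemma C1_smooth {N d : ℕ} [NeZero N]
    {F : (Fin N → ℝ) → Spin N d} (hF : ContDiffOn ℝ (⊤ : ℕ∞) F (C1 N)) {z : Fin N → ℝ}
    (hz : z ∈ C1 N) (i : Fin N) : DifferentiableAt ℝ F z ∧ DifferentiableAt ℝ (pd i F) z := by
  have h := hF.contDiffAt ((isOpen_C1 N).mem_nhds hz)
  refine ⟨h.differentiableAt (by simp), ?_⟩
  have h2 : ContDiffAt ℝ 1 (fderiv ℝ F) z := h.fderiv_right (WithTop.coe_le_coe.mpr le_top)
  unfold pd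
  exact (h2.differentiableAt (by simp)).clm_apply (differentiableAt_const _)

lemma pd_Psi {N d : ℕ} [NeZero N] (hN : 3 ≤ N) (a b ω : ℝ)
    {F : (Fin N → ℝ) → Spin N d} (hF : ContDiffOn ℝ (⊤ : ℕ∞) F (C1 N)) {x : Fin N → ℝ}
    (hx : x ∈ C1 N) (i : Fin N) :
    pd i (fun y => mu1 a b ω y • F (zeta y)) x =
      mu1 a b ω x • (phi a b ω i x • F (zeta x) + (2 * x i) • pd i F (zeta x)) := by
  have hd := (C1_smooth hF (zeta_mem hx) i).1
  rw [pd_smul (mu_diff hN a b ω hx) (g := fun y => F (zeta y)) (hd.comp x (differentiable_zeta x)), pd_zeta hd,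
    pd_mu hN a b ω hx]
  module

lemma pd_coord {N : ℕ} (x : Fin N → ℝ) (i : Fin N) : pd i (fun y => 2 * y i) x = 2 := by
  refine pd_line (by fun_prop) ?_
  simpa using (coord x i i).const_mul 2

lemma pd2_Psi {N d : ℕ} [NeZero N] (hN : 3 ≤ N) (a b ω : ℝ)
    {F : (Fin N → ℝ) → Spin N d} (hF : ContDiffOn ℝ (⊤ : ℕ∞) F (C1 N)) {x : Fin N → ℝ}
    (hx : x ∈ C1 N) (i : Fin N) :
    pd i (pd i (fun y => mu1 a b ω y • F (zeta y))) x =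
      mu1 a b ω x • ((phi a b ω i x ^ 2 + pd i (phi a b ω i) x) • F (zeta x)
        + (4 * x i * phi a b ω i x + 2) • pd i F (zeta x)
        + (4 * x i ^ 2) • pd i (pd i F) (zeta x)) := by
  obtain ⟨hd, hd2⟩ := C1_smooth hF (zeta_mem hx) i
  have hev : pd i (fun y => mu1 a b ω y • F (zeta y)) =ᶠ[nhds x] fun y =>
      mu1 a b ω y • (phi a b ω i y • F (zeta y) + (2 * y i) • pd i F (zeta y)) := by
    filter_upwards [(isOpen_C1 N).mem_nhds hx] with y hy using pd_Psi hN a b ω hF hy i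
  have d1 : DifferentiableAt ℝ (fun y => F (zeta y)) x := hd.comp x (differentiable_zeta x)
  have d2 : DifferentiableAt ℝ (fun y => pd i F (zeta y)) x := hd2.comp x (differentiable_zeta x)
  have d3 : DifferentiableAt ℝ (fun y : Fin N → ℝ => 2 * y i) x := by fun_prop
  have d4 := phi_diff hN a b ω hx i
  have e : pd i (pd i (fun y => mu1 a b ω y • F (zeta y))) x = pd i (fun y =>
      mu1 a b ω y • (phi a b ω i y • F (zeta y) + (2 * y i) • pd i F (zeta y))) x := by
    conv_lhs => rw [pd]
    rw [hev.fderiv_eq]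
    rfl
  rw [e, pd_smul (mu_diff hN a b ω hx) (g := fun y => phi a b ω i y • F (zeta y) + (2 * y i) • pd i F (zeta y))
      ((d4.fun_smul d1).fun_add (d3.fun_smul d2)),
    pd_add (f := fun y => phi a b ω i y • F (zeta y)) (g := fun y => (2 * y i) • pd i F (zeta y))
      (d4.fun_smul d1) (d3.fun_smul d2),
    pd_smul (g := fun y => F (zeta y)) d4 d1,
    pd_smul (f := fun y : Fin N → ℝ => 2 * y i) (g := fun y => pd i F (zeta y)) d3 d2,
    pd_zeta hd, pd_zeta hd2, pd_mu hN a b ω hx, pd_coord]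
  module

lemma sum_shift {N : ℕ} [NeZero N] {E : Type} [AddCommGroup E] (f : Fin N → E) :
    ∑ i, f (i - 1) = ∑ i, f i :=
  Equiv.sum_comp (Equiv.subRight (1 : Fin N)) f

/-- telescoping vector -/
def tele {N d : ℕ} [NeZero N] (a b ω : ℝ) (x : Fin N → ℝ) (A : Spin N d)
    (D : Fin N → Spin N d) (i : Fin N) : Spin N d :=
  ((2 * a + 4 * a * b) * ((x i) ^ 2 - (x (i + 1)) ^ 2)⁻¹
    + (4 * a - 4 * a ^ 2) * x (i + 1) ^ 2 * (((x i) ^ 2 - (x (i + 1)) ^ 2)⁻¹) ^ 2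
    - 4 * a * ω * x (i + 1) ^ 2 * ((x i) ^ 2 - (x (i + 1)) ^ 2)⁻¹) • A
  + (8 * a * x (i + 1) ^ 2 * ((x i) ^ 2 - (x (i + 1)) ^ 2)⁻¹) • D (i + 1)

lemma termwise {N d : ℕ} [NeZero N] (hN : 3 ≤ N) (a b ω : ℝ) {x : Fin N → ℝ} (hx : x ∈ C1 N)
    (A : Spin N d) (D DD S : Fin N → Spin N d) (i : Fin N) :
    -((phi a b ω i x ^ 2 + pd i (phi a b ω i) x) • A + (4 * x i * phi a b ω i x + 2) • D i
        + (4 * x i ^ 2) • DD i)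
      + (ω ^ 2 * x i ^ 2 + b * (b - 1) / x i ^ 2 + 8 * a ^ 2 * (x i) ^ 2 /
            (((x i) ^ 2 - (x (i - 1)) ^ 2) * ((x i) ^ 2 - (x (i + 1)) ^ 2))) • A
      + (4 * a) • ((((x i) ^ 2 + (x (i + 1)) ^ 2) / ((x i) ^ 2 - (x (i + 1)) ^ 2) ^ 2) •
          (a • A - S i))
    = ((-4 : ℝ) • ((x i ^ 2 • DD i) + (2 * a) • ((x i ^ 2 - x (i + 1) ^ 2)⁻¹ •
        (x i ^ 2 • D i - x (i + 1) ^ 2 • D (i + 1)))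
        - a • (((x i ^ 2 + x (i + 1) ^ 2) / (x i ^ 2 - x (i + 1) ^ 2) ^ 2) • (A - S i)))
      - (2 * (2 * b + 1)) • D i + (4 * ω) • (x i ^ 2 • D i) + (ω * (4 * a + 2 * b + 1)) • A)
      + (tele a b ω x A D (i - 1) - tele a b ω x A D i) := by
  have h1 := C1_sub_ne hx (succ_ne hN i).symm
  have h2 := C1_sub_ne hx (succ_ne hN (i - 1)).symm
  rw [sub_add_cancel] at h2
  have h' := (C1_pos hx i).ne'
  rw [pd_phi hN a b ω hx, tele, tele, phi, sub_add_cancel]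
  have e0 : (x i ^ 2 - x (i - 1) ^ 2) = -(x (i - 1) ^ 2 - x i ^ 2) := by ring
  rw [e0]
  generalize D (i + 1) = D1, D i = D0, DD i = E0, S i = S0 at *
  generalize hp : x (i - 1) ^ 2 - x i ^ 2 = p at *
  generalize hg : x i ^ 2 - x (i + 1) ^ 2 = g at *
  generalize x i = y at *
  have hz : x (i + 1) ^ 2 = y ^ 2 - g := by rw [← hg]; ring
  rw [hz]
  match_scalars <;> field_simp <;> ring

lemma Sop_smul {N d : ℕ} (i j : Fin N) (m : ℝ) (v : Spin N d) :
    Sop i j (m • v) = m • Sop i j v := rfl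

theorem stmt_11 (N d : ℕ) [NeZero N] (hN : 3 ≤ N) (hd : 1 ≤ d)
    (a b ω : ℝ) (ha : 1 / 2 < a) (hb : 1 / 2 < b) (hω : 0 < ω)
    (F : (Fin N → ℝ) → Spin N d) (hF : ContDiffOn ℝ (⊤ : ℕ∞) F (C1 N)) :
    ∀ x ∈ C1 N,
      H1 a b ω (fun y => mu1 a b ω y • F (zeta y)) x =
        mu1 a b ω x • Hbar1 a b ω F (zeta x) := by
  intro x hx
  have key := Finset.sum_congr (rfl : (Finset.univ : Finset (Fin N)) = Finset.univ)
    fun i _ => termwise hN a b ω hx (F (zeta x)) (fun i => pd i F (zeta x))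
      (fun i => pd i (pd i F) (zeta x)) (fun i => Sop i (i + 1) (F (zeta x))) i
  have ht := sum_shift (tele a b ω x (F (zeta x)) (fun i => pd i F (zeta x)))
  simp only [Finset.sum_add_distrib, Finset.sum_sub_distrib, Finset.sum_neg_distrib,
    ← Finset.smul_sum, ← Finset.sum_smul, ht, sub_self, add_zero, Finset.sum_const,
    Finset.card_univ, Fintype.card_fin, ← Nat.cast_smul_eq_nsmul ℝ] at key
  simp only [H1, pd2_Psi hN a b ω hF hx, Sop_smul, Hbar1, T1star]
  have hz : ∀ i, zeta x i = x i ^ 2 := fun i => rfl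
  simp only [hz]
  simp only [smul_comm _ (mu1 a b ω x), ← Finset.smul_sum, ← smul_neg, ← smul_add, ← smul_sub]
  congr 1
  refine Eq.trans ?_ (key.trans ?_)
  · simp only [Finset.sum_add_distrib, ← Finset.sum_smul, Finset.mul_sum]
  · congr 1
    module
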